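/- Fix a ferromagnetic Ising model μ(J,h) on n nodes (J_{ij} ≥ 0, h_i ≥ 0 for all i,j). For every i ∈ [n], the discrete influence function I_i(S) = E_{X∼μ(J,h)}[X_i | X_s = 1 for all s ∈ S] is a monotone submodular set function on subsets of [n]: (monotonicity) S ⊆ T implies I_i(S) ≤ I_i(T), and (submodularity) for S ⊆ T and any j, I_i(T ∪ {j}) − I_i(T) ≤ I_i(S ∪ {j}) − I_i(S). -/

import Mathlib

/-!
The proof uses four replicas of the model, in the manner of Ellis–Monroe–Newman and Lebowitz.
Given `S ⊆ T`, let replicas 1, 2 be independent samples conditioned on `X = 1` on `T`, and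
replicas 3, 4 independent samples conditioned on `X = 1` on `S`. At each site replace the four
spins by their Hadamard combinations `A = s₁+s₂+s₃+s₄`, `B = s₁+s₂-s₃-s₄`, `G = s₁-s₂+s₃-s₄`,
`D = -s₁+s₂+s₃-s₄`. Since the transform is orthogonal up to scale, the total log-weight is a
polynomial in these variables with nonnegative coefficients, and all mixed single-site moments of
`A, B, G, D` are nonnegative, whether the site is free, pinned in replicas 1, 2 only, or pinned in
all four (`local_moment_nonneg`). Expanding the exponential, every polynomial with nonnegative
coefficients in these variables has nonnegative four-replica expectation
(`replica_expectation_nonneg`). This is used for two polynomials.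

* `B j` gives `E[X_j | S] ≤ E[X_j | T]`, which is monotonicity (`first_moment_mono`).
* `G i * D j + D i * G j` gives `Cov(X_i, X_j | T) ≤ Cov(X_i, X_j | S)` (`cov_antitone`).

Writing the event `X_j = 1` as `(1 + X_j) / 2`, the marginal influence is
`I_i(S ∪ {j}) - I_i(S) = Cov(X_i, X_j | S) / (1 + E[X_j | S])`. Passing from `S` to `T` decreases
the numerator, which stays nonnegative by monotonicity, and increases the denominator; hence
submodularity.
-/

open Finset
open scoped BigOperators Classical

noncomputable section

/-- The value of a spin: `true ↦ 1`, `false ↦ -1`. -/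
def spin (b : Bool) : ℝ := if b then 1 else -1

/-- Boltzmann weight of a configuration of the Ising model `μ(J,h)`. -/
def isingWeight (n : ℕ) (J : Fin n → Fin n → ℝ) (h : Fin n → ℝ) (x : Fin n → Bool) : ℝ :=
  Real.exp ((1 / 2) * (∑ a, ∑ b, J a b * spin (x a) * spin (x b)) + ∑ a, h a * spin (x a))

/-- The discrete influence function `I_i(S) = E[X_i | X_s = 1 for all s ∈ S]`. -/
def influence (n : ℕ) (J : Fin n → Fin n → ℝ) (h : Fin n → ℝ) (i : Fin n)
    (S : Finset (Fin n)) : ℝ :=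
  (∑ x : Fin n → Bool, if ∀ s ∈ S, x s = true then spin (x i) * isingWeight n J h x else 0) /
  (∑ x : Fin n → Bool, if ∀ s ∈ S, x s = true then isingWeight n J h x else 0)

/-! ### Hadamard variables at one site -/

/-- The spins of one site in the four replicas. -/
abbrev Quad : Type := Bool × Bool × Bool × Bool

/-- The four (unnormalised) Hadamard combinations of the spins at a site. The overall sign of the
last one is chosen so that the product of all four is nonnegative. -/
def had : Fin 4 → Quad → ℝ
  | 0, q => spin q.1 + spin q.2.1 + spin q.2.2.1 + spin q.2.2.2
  | 1, q => spin q.1 + spin q.2.1 - spin q.2.2.1 - spin q.2.2.2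
  | 2, q => spin q.1 - spin q.2.1 + spin q.2.2.1 - spin q.2.2.2
  | 3, q => -spin q.1 + spin q.2.1 + spin q.2.2.1 - spin q.2.2.2

/-- The indicator of `X = 1` on `S`. -/
def pin {n : ℕ} (S : Finset (Fin n)) (x : Fin n → Bool) : ℝ :=
  if ∀ s ∈ S, x s = true then 1 else 0

/-- Single-site indicator: replicas 1, 2 are pinned to `1` when `t` holds, replicas 3, 4 when `s`
holds. -/
def sitePin (t s : Prop) (q : Quad) : ℝ :=
  if (t → q.1 = true ∧ q.2.1 = true) ∧ (s → q.2.2.1 = true ∧ q.2.2.2 = true) then 1 else 0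

/-- Mixed moments of the Hadamard variables at one site are nonnegative for each admissible pattern
of pinned replicas. -/
lemma local_moment_nonneg (t s : Prop) (hst : s → t) (m : Fin 4 → ℕ) :
    0 ≤ ∑ q : Quad, sitePin t s q * ∏ r, had r q ^ m r := by
  simp only [Fintype.sum_prod_type, Fintype.sum_bool, Fin.prod_univ_four, had, sitePin, spin]
  generalize m 0 = a
  generalize m 1 = b
  generalize m 2 = c
  generalize m 3 = d
  have parity : ∀ k : ℕ, (∀ x : ℝ, (-x) ^ k = x ^ k) ∨ (∀ x : ℝ, (-x) ^ k = -x ^ k) := fun k =>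
    (Nat.even_or_odd k).imp (fun h x => h.neg_pow x) (fun h x => h.neg_pow x)
  by_cases ht : t <;> by_cases hs : s
  · simp [ht, hs]
    norm_num
    positivity
  · simp [ht, hs]
    norm_num
    rcases parity c with hc | hc <;> rcases parity d with hd | hd <;>
      simp only [hc, hd] <;> ring_nf <;> positivity
  · exact absurd (hst hs) ht
  · simp [ht, hs]
    norm_num
    rcases parity a with ha | ha <;> rcases parity b with hb | hb <;>
    rcases parity c with hc | hc <;> rcases parity d with hd | hd <;>
      simp only [ha, hb, hc, hd] <;> ring_nf <;> positivity

/-! ### Positivity of the four-replica expectation -/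

/-- The polynomials with nonnegative coefficients in the Hadamard variables of all sites, as
functions of the four-replica configuration. -/
def posCone (n : ℕ) : Subsemiring ((Fin n → Quad) → ℝ) :=
  Subsemiring.closure ({F | ∃ c : ℝ, 0 ≤ c ∧ F = fun _ => c} ∪
    {F | ∃ (r : Fin 4) (a : Fin n), F = fun y => had r (y a)})

lemma const_mem_posCone {n : ℕ} {c : ℝ} (hc : 0 ≤ c) : (fun _ => c) ∈ posCone n :=
  Subsemiring.subset_closure (Or.inl ⟨c, hc, rfl⟩)

lemma had_mem_posCone {n : ℕ} (r : Fin 4) (a : Fin n) : (fun y => had r (y a)) ∈ posCone n :=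
  Subsemiring.subset_closure (Or.inr ⟨r, a, rfl⟩)

/-- The indicator that every replica satisfies its conditioning. -/
def quadPin {n : ℕ} (S T : Finset (Fin n)) (y : Fin n → Quad) : ℝ :=
  ∏ a, sitePin (a ∈ T) (a ∈ S) (y a)

/-- Without interaction the sites are independent, so moments factor over sites. -/
lemma posCone_sum_nonneg {n : ℕ} {S T : Finset (Fin n)} (hST : S ⊆ T)
    {F : (Fin n → Quad) → ℝ} (hF : F ∈ posCone n) : 0 ≤ ∑ y, quadPin S T y * F y := by
  rw [posCone, Subsemiring.mem_closure_iff] at hF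
  induction hF using AddSubmonoid.closure_induction with
  | zero => simp
  | add F G _ _ h1 h2 =>
    simp only [Pi.add_apply, mul_add, Finset.sum_add_distrib]
    exact add_nonneg h1 h2
  | mem F hF =>
    have key : ∃ c : ℝ, 0 ≤ c ∧ ∃ m : Fin n → Fin 4 → ℕ,
        F = fun y => c * ∏ a, ∏ r, had r (y a) ^ m a r := by
      induction hF using Submonoid.closure_induction with
      | one => exact ⟨1, zero_le_one, 0, by ext; simp⟩
      | mul F G _ _ h1 h2 =>
        obtain ⟨c, hc, m, rfl⟩ := h1
        obtain ⟨d, hd, l, rfl⟩ := h2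
        refine ⟨c * d, mul_nonneg hc hd, m + l, ?_⟩
        ext y
        simp only [Pi.mul_apply, Pi.add_apply, pow_add, Finset.prod_mul_distrib]
        ring
      | mem F hF =>
        rcases hF with ⟨c, hc, rfl⟩ | ⟨r, a, rfl⟩
        · exact ⟨c, hc, 0, by ext; simp⟩
        · refine ⟨1, zero_le_one, fun b k => if b = a then (if k = r then 1 else 0) else 0, ?_⟩
          ext y
          rw [one_mul, Finset.prod_eq_single a, Finset.prod_eq_single r] <;> simp +contextual
    obtain ⟨c, hc, m, rfl⟩ := key
    have : ∑ y : Fin n → Quad, quadPin S T y * (c * ∏ a, ∏ r, had r (y a) ^ m a r)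
        = c * ∏ a, ∑ q : Quad, sitePin (a ∈ T) (a ∈ S) q * ∏ r, had r q ^ m a r := by
      rw [Finset.prod_univ_sum, Fintype.piFinset_univ, Finset.mul_sum]
      refine Finset.sum_congr rfl fun y _ => ?_
      rw [quadPin, Finset.prod_mul_distrib]
      ring
    rw [this]
    exact mul_nonneg hc (Finset.prod_nonneg fun a _ =>
      local_moment_nonneg _ _ (fun h => hST h) _)

/-- Tilting by the exponential of an element of the cone preserves positivity: the partial sums of
the exponential series stay in the cone. -/
lemma posCone_exp_sum_nonneg {n : ℕ} {S T : Finset (Fin n)} (hST : S ⊆ T)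
    {F H : (Fin n → Quad) → ℝ} (hF : F ∈ posCone n) (hH : H ∈ posCone n) :
    0 ≤ ∑ y, quadPin S T y * (Real.exp (H y) * F y) := by
  have hlim : Filter.Tendsto
      (fun N : ℕ => ∑ y, quadPin S T y * ((∑ k ∈ range N, H y ^ k / (k.factorial : ℝ)) * F y))
      Filter.atTop (nhds (∑ y, quadPin S T y * (Real.exp (H y) * F y))) := by
    refine tendsto_finsetSum _ fun y _ => Filter.Tendsto.const_mul _ (Filter.Tendsto.mul_const _ ?_)
    rw [Real.exp_eq_exp_ℝ]
    exact (NormedSpace.expSeries_div_hasSum_exp (H y)).tendsto_sum_nat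
  refine ge_of_tendsto' hlim fun N => ?_
  have hmem : (∑ k ∈ range N, (fun _ => ((k.factorial : ℝ))⁻¹) * H ^ k) * F ∈ posCone n :=
    mul_mem (sum_mem fun k _ => mul_mem (const_mem_posCone (by positivity)) (pow_mem hH k)) hF
  refine (posCone_sum_nonneg hST hmem).trans_eq (Finset.sum_congr rfl fun y _ => ?_)
  simp only [Pi.mul_apply, Finset.sum_apply, Pi.pow_apply, div_eq_inv_mul]

/-- Four replicas as one configuration with values in `Quad`. -/
def quadEquiv (n : ℕ) :
    (Fin n → Bool) × (Fin n → Bool) × (Fin n → Bool) × (Fin n → Bool) ≃ (Fin n → Quad) where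
  toFun p a := (p.1 a, p.2.1 a, p.2.2.1 a, p.2.2.2 a)
  invFun y := (fun a => (y a).1, fun a => (y a).2.1, fun a => (y a).2.2.1, fun a => (y a).2.2.2)
  left_inv _ := rfl
  right_inv _ := rfl

lemma quadPin_quadEquiv {n : ℕ} {S T : Finset (Fin n)} (x₁ x₂ x₃ x₄ : Fin n → Bool) :
    quadPin S T (quadEquiv n (x₁, x₂, x₃, x₄)) = pin T x₁ * pin T x₂ * pin S x₃ * pin S x₄ := by
  simp only [quadPin, sitePin, pin, quadEquiv, Equiv.coe_fn_mk, ite_zero_mul_ite_zero, mul_one]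
  split_ifs with H
  · obtain ⟨⟨⟨h1, h2⟩, h3⟩, h4⟩ := H
    exact Finset.prod_eq_one fun a _ =>
      if_pos ⟨fun ha => ⟨h1 a ha, h2 a ha⟩, fun ha => ⟨h3 a ha, h4 a ha⟩⟩
  · by_contra hne
    have hall : ∀ a, (a ∈ T → x₁ a = true ∧ x₂ a = true) ∧ (a ∈ S → x₃ a = true ∧ x₄ a = true) := by
      intro a
      by_contra ha
      refine hne (Finset.prod_eq_zero (Finset.mem_univ a) ?_)
      exact if_neg ha
    exact H ⟨⟨⟨fun a ha => ((hall a).1 ha).1, fun a ha => ((hall a).1 ha).2⟩,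
      fun a ha => ((hall a).2 ha).1⟩, fun a ha => ((hall a).2 ha).2⟩

/-- The total log-weight of the four replicas in Hadamard variables. -/
def quadEnergy (n : ℕ) (J : Fin n → Fin n → ℝ) (h : Fin n → ℝ) : (Fin n → Quad) → ℝ :=
  (∑ a, ∑ b, (fun _ => J a b / 8) * ∑ r, (fun y => had r (y a)) * (fun y => had r (y b))) +
    ∑ a, (fun _ => h a) * (fun y => had 0 (y a))

lemma quadEnergy_mem_posCone {n : ℕ} {J : Fin n → Fin n → ℝ} {h : Fin n → ℝ}
    (hJ : ∀ a b, 0 ≤ J a b) (hh : ∀ a, 0 ≤ h a) : quadEnergy n J h ∈ posCone n := by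
  refine add_mem (sum_mem fun a _ => sum_mem fun b _ => mul_mem (const_mem_posCone ?_)
    (sum_mem fun r _ => mul_mem (had_mem_posCone r a) (had_mem_posCone r b)))
    (sum_mem fun a _ => mul_mem (const_mem_posCone (hh a)) (had_mem_posCone 0 a))
  exact div_nonneg (hJ a b) (by norm_num)

/-- The Hadamard transform is orthogonal up to scale, so it preserves the form of the energy. -/
lemma exp_quadEnergy {n : ℕ} (J : Fin n → Fin n → ℝ) (h : Fin n → ℝ)
    (x₁ x₂ x₃ x₄ : Fin n → Bool) :
    Real.exp (quadEnergy n J h (quadEquiv n (x₁, x₂, x₃, x₄))) =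
      isingWeight n J h x₁ * isingWeight n J h x₂ * isingWeight n J h x₃ * isingWeight n J h x₄ := by
  simp only [isingWeight, ← Real.exp_add]
  congr 1
  simp only [quadEnergy, Pi.add_apply, Pi.mul_apply, Finset.sum_apply, Finset.mul_sum,
    Fin.sum_univ_four, had, quadEquiv, Equiv.coe_fn_mk]
  have e : ∀ p q r s p' q' r' s' : ℝ, p + p' + (q + q') + (r + r') + (s + s')
      = (p + q + r + s) + (p' + q' + r' + s') := by intros; ring
  rw [e]
  simp only [← Finset.sum_add_distrib]
  refine Finset.sum_congr rfl fun a _ => ?_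
  congr 1
  · refine Finset.sum_congr rfl fun b _ => ?_
    ring
  · ring

/-- The unnormalised expectation of `f` conditioned on `X = 1` on `S`. -/
def pinSum (n : ℕ) (J : Fin n → Fin n → ℝ) (h : Fin n → ℝ) (S : Finset (Fin n))
    (f : (Fin n → Bool) → ℝ) : ℝ :=
  ∑ x, pin S x * isingWeight n J h x * f x

/-- Polynomials with nonnegative coefficients in the Hadamard variables have nonnegative
four-replica expectation. -/
lemma replica_expectation_nonneg {n : ℕ} {J : Fin n → Fin n → ℝ} {h : Fin n → ℝ}
    (hJ : ∀ a b, 0 ≤ J a b) (hh : ∀ a, 0 ≤ h a) {S T : Finset (Fin n)} (hST : S ⊆ T)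
    {F : (Fin n → Quad) → ℝ} (hF : F ∈ posCone n) :
    0 ≤ pinSum n J h T fun x₁ => pinSum n J h T fun x₂ => pinSum n J h S fun x₃ =>
      pinSum n J h S fun x₄ => F (quadEquiv n (x₁, x₂, x₃, x₄)) := by
  refine (posCone_exp_sum_nonneg hST hF (quadEnergy_mem_posCone hJ hh)).trans_eq ?_
  rw [← (quadEquiv n).sum_comp]
  simp only [Fintype.sum_prod_type, quadPin_quadEquiv, exp_quadEnergy, pinSum, Finset.mul_sum]
  refine Finset.sum_congr rfl fun x₁ _ => Finset.sum_congr rfl fun x₂ _ =>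
    Finset.sum_congr rfl fun x₃ _ => Finset.sum_congr rfl fun x₄ _ => ?_
  ring

/-! ### Conditioned expectations and the influence function -/

section PinSum

variable {n : ℕ} {J : Fin n → Fin n → ℝ} {h : Fin n → ℝ} {S : Finset (Fin n)}

lemma pinSum_add (f g : (Fin n → Bool) → ℝ) :
    pinSum n J h S (fun x => f x + g x) = pinSum n J h S f + pinSum n J h S g := by
  simp only [pinSum, mul_add, Finset.sum_add_distrib]

lemma pinSum_sub (f g : (Fin n → Bool) → ℝ) :
    pinSum n J h S (fun x => f x - g x) = pinSum n J h S f - pinSum n J h S g := by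
  simp only [pinSum, mul_sub, Finset.sum_sub_distrib]

lemma pinSum_mul_const (c : ℝ) (f : (Fin n → Bool) → ℝ) :
    pinSum n J h S (fun x => f x * c) = pinSum n J h S f * c := by
  simp only [pinSum, Finset.sum_mul, mul_assoc]

lemma pinSum_const_mul (c : ℝ) (f : (Fin n → Bool) → ℝ) :
    pinSum n J h S (fun x => c * f x) = c * pinSum n J h S f := by
  simp only [mul_comm c, pinSum_mul_const]

lemma pinSum_const {Z : ℝ} (hZ : pinSum n J h S (fun _ => 1) = Z) (c : ℝ) :
    pinSum n J h S (fun _ => c) = c * Z := by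
  rw [← hZ, ← pinSum_const_mul, mul_one]

lemma pinSum_one_pos : 0 < pinSum n J h S (fun _ => 1) := by
  refine Finset.sum_pos' (fun x _ => ?_) ⟨fun _ => true, Finset.mem_univ _, ?_⟩
  · unfold pin isingWeight
    positivity
  · simp [pin, isingWeight, Real.exp_pos]

lemma influence_eq (i : Fin n) :
    influence n J h i S = pinSum n J h S (fun x => spin (x i)) / pinSum n J h S (fun _ => 1) := by
  simp only [influence, pinSum, pin, ite_mul, zero_mul, one_mul, mul_one]
  congr 1
  refine Finset.sum_congr rfl fun x _ => ?_
  rw [mul_comm]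

/-- The indicator of `X_j = 1` is `(1 + X_j) / 2`. -/
lemma pinSum_insert (j : Fin n) (f : (Fin n → Bool) → ℝ) :
    pinSum n J h (insert j S) f =
      (pinSum n J h S f + pinSum n J h S (fun x => f x * spin (x j))) / 2 := by
  rw [← pinSum_add]
  simp only [pinSum, Finset.sum_div]
  refine Finset.sum_congr rfl fun x _ => ?_
  have : pin (insert j S) x = pin S x * ((1 + spin (x j)) / 2) := by
    simp only [pin, Finset.forall_mem_insert, spin]
    by_cases hj : x j = true <;> simp [hj]
  rw [this]
  ring

end PinSum

/-! ### Comparison of moments under two conditionings -/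

section Inequalities

variable {n : ℕ} {J : Fin n → Fin n → ℝ} {h : Fin n → ℝ} {S T : Finset (Fin n)}

/-- `E[X_j | S] ≤ E[X_j | T]`, with denominators cleared. -/
lemma first_moment_mono (hJ : ∀ a b, 0 ≤ J a b) (hh : ∀ a, 0 ≤ h a) (hST : S ⊆ T) (j : Fin n) :
    pinSum n J h S (fun x => spin (x j)) * pinSum n J h T (fun _ => 1) ≤
      pinSum n J h T (fun x => spin (x j)) * pinSum n J h S (fun _ => 1) := by
  have key := replica_expectation_nonneg hJ hh hST (had_mem_posCone 1 j)
  have posT := pinSum_one_pos (J := J) (h := h) (S := T)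
  have posS := pinSum_one_pos (J := J) (h := h) (S := S)
  generalize hT : pinSum n J h T (fun _ => 1) = ZT at *
  generalize hS : pinSum n J h S (fun _ => 1) = ZS at *
  simp only [had, quadEquiv, Equiv.coe_fn_mk, pinSum_add, pinSum_sub,
    pinSum_mul_const, pinSum_const hT, pinSum_const hS] at key
  refine le_of_mul_le_mul_right ?_ (mul_pos posT posS)
  linarith

/-- `Cov(X_i, X_j | T) ≤ Cov(X_i, X_j | S)`, with denominators cleared. -/
lemma cov_antitone (hJ : ∀ a b, 0 ≤ J a b) (hh : ∀ a, 0 ≤ h a) (hST : S ⊆ T) (i j : Fin n) :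
    (pinSum n J h T (fun x => spin (x i) * spin (x j)) * pinSum n J h T (fun _ => 1) -
      pinSum n J h T (fun x => spin (x i)) * pinSum n J h T (fun x => spin (x j))) *
        pinSum n J h S (fun _ => 1) ^ 2 ≤
    (pinSum n J h S (fun x => spin (x i) * spin (x j)) * pinSum n J h S (fun _ => 1) -
      pinSum n J h S (fun x => spin (x i)) * pinSum n J h S (fun x => spin (x j))) *
        pinSum n J h T (fun _ => 1) ^ 2 := by
  have key := replica_expectation_nonneg hJ hh hST
    (add_mem (mul_mem (had_mem_posCone 2 i) (had_mem_posCone 3 j))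
      (mul_mem (had_mem_posCone 3 i) (had_mem_posCone 2 j)))
  -- Since `G + D = 2 (s₃ - s₄)` and `G - D = 2 (s₁ - s₂)`, the mixed term `G D + D G` polarises to a
  -- difference of covariance estimators for replicas 3, 4 and replicas 1, 2.
  have polar : ∀ x₁ x₂ x₃ x₄ : Fin n → Bool,
      ((fun y : Fin n → Quad => had 2 (y i)) * (fun y : Fin n → Quad => had 3 (y j)) +
        (fun y : Fin n → Quad => had 3 (y i)) * (fun y : Fin n → Quad => had 2 (y j)))
        (quadEquiv n (x₁, x₂, x₃, x₄)) =
      2 * ((spin (x₃ i) * spin (x₃ j) - spin (x₃ i) * spin (x₄ j) - spin (x₄ i) * spin (x₃ j)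
          + spin (x₄ i) * spin (x₄ j))
        - (spin (x₁ i) * spin (x₁ j) - spin (x₁ i) * spin (x₂ j) - spin (x₂ i) * spin (x₁ j)
          + spin (x₂ i) * spin (x₂ j))) := by
    intro x₁ x₂ x₃ x₄
    simp only [had, quadEquiv, Equiv.coe_fn_mk, Pi.add_apply, Pi.mul_apply]
    ring
  simp only [polar] at key
  generalize hT : pinSum n J h T (fun _ => 1) = ZT at *
  generalize hS : pinSum n J h S (fun _ => 1) = ZS at *
  simp only [pinSum_add, pinSum_sub, pinSum_const_mul,
    pinSum_mul_const, pinSum_const hT, pinSum_const hS] at key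
  linarith

/-- `E[X_i | S ∪ {j}] - E[X_i | S] = Cov(X_i, X_j | S) / (1 + E[X_j | S])`, with both parts of the
fraction multiplied by the square of the normalising constant. -/
lemma influence_insert_sub (i j : Fin n) :
    influence n J h i (insert j S) - influence n J h i S =
      (pinSum n J h S (fun x => spin (x i) * spin (x j)) * pinSum n J h S (fun _ => 1) -
        pinSum n J h S (fun x => spin (x i)) * pinSum n J h S (fun x => spin (x j))) /
      (pinSum n J h S (fun _ => 1) *
        (pinSum n J h S (fun _ => 1) + pinSum n J h S (fun x => spin (x j)))) := by
  have posS := pinSum_one_pos (J := J) (h := h) (S := S)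
  have pos' := pinSum_one_pos (J := J) (h := h) (S := insert j S)
  rw [pinSum_insert] at pos'
  rw [influence_eq, influence_eq, pinSum_insert, pinSum_insert]
  simp only [one_mul] at *
  generalize pinSum n J h S (fun _ => 1) = Z at *
  generalize pinSum n J h S (fun x => spin (x j)) = N at *
  have : Z + N ≠ 0 := by linarith
  field_simp
  ring

lemma influence_mono (hJ : ∀ a b, 0 ≤ J a b) (hh : ∀ a, 0 ≤ h a) (hST : S ⊆ T) (i : Fin n) :
    influence n J h i S ≤ influence n J h i T := by
  rw [influence_eq, influence_eq, div_le_div_iff₀ pinSum_one_pos pinSum_one_pos]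
  exact first_moment_mono hJ hh hST i

end Inequalities

/-- In a ferromagnetic Ising model, the discrete influence function is monotone
and submodular. -/
theorem influence_monotone_submodular (n : ℕ) (J : Fin n → Fin n → ℝ) (h : Fin n → ℝ)
    (hsymm : ∀ a b, J a b = J b a) (hdiag : ∀ a, J a a = 0)
    (hJ : ∀ a b, 0 ≤ J a b) (hh : ∀ a, 0 ≤ h a) (i : Fin n) :
    (∀ S T : Finset (Fin n), S ⊆ T → influence n J h i S ≤ influence n J h i T) ∧
    (∀ S T : Finset (Fin n), S ⊆ T → ∀ j : Fin n,
      influence n J h i (insert j T) - influence n J h i T ≤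
        influence n J h i (insert j S) - influence n J h i S) := by
  refine ⟨fun S T hST => influence_mono hJ hh hST i, fun S T hST j => ?_⟩
  have cov_nonneg := sub_nonneg.2 (influence_mono hJ hh (Finset.subset_insert j T) i)
  have cov_le := cov_antitone hJ hh hST i j
  have mean_le := first_moment_mono hJ hh hST j
  have posT := pinSum_one_pos (J := J) (h := h) (S := T)
  have posS := pinSum_one_pos (J := J) (h := h) (S := S)
  have posT' := pinSum_one_pos (J := J) (h := h) (S := insert j T)
  have posS' := pinSum_one_pos (J := J) (h := h) (S := insert j S)
  rw [pinSum_insert] at posT' posS'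
  simp only [one_mul] at posT' posS'
  rw [influence_insert_sub] at cov_nonneg ⊢
  rw [influence_insert_sub]
  generalize pinSum n J h T (fun x => spin (x i) * spin (x j)) * pinSum n J h T (fun _ => 1) -
    pinSum n J h T (fun x => spin (x i)) * pinSum n J h T (fun x => spin (x j)) = KT at *
  generalize pinSum n J h S (fun x => spin (x i) * spin (x j)) * pinSum n J h S (fun _ => 1) -
    pinSum n J h S (fun x => spin (x i)) * pinSum n J h S (fun x => spin (x j)) = KS at *
  generalize pinSum n J h T (fun _ => 1) = ZT at *
  generalize pinSum n J h S (fun _ => 1) = ZS at *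
  generalize pinSum n J h T (fun x => spin (x j)) = NT at *
  generalize pinSum n J h S (fun x => spin (x j)) = NS at *
  have hT : 0 < ZT + NT := by linarith
  have hS : 0 < ZS + NS := by linarith
  have hKT : 0 ≤ KT := by
    by_contra hneg
    exact absurd cov_nonneg (not_le.2 (div_neg_of_neg_of_pos (not_le.1 hneg) (mul_pos posT hT)))
  -- Both fractions are normalised to `Cov / (1 + E[X_j])`, so that numerators and denominators
  -- can be compared separately.
  have normalise : ∀ K Z N : ℝ, 0 < Z → K / (Z * (Z + N)) = K / Z ^ 2 / ((Z + N) / Z) := by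
    intro K Z N hZ
    field_simp
  rw [normalise KT ZT NT posT, normalise KS ZS NS posS]
  have num_le : KT / ZT ^ 2 ≤ KS / ZS ^ 2 := by
    rw [div_le_div_iff₀ (by positivity) (by positivity)]
    exact cov_le
  have den_le : (ZS + NS) / ZS ≤ (ZT + NT) / ZT := by
    rw [div_le_div_iff₀ posS posT]
    linarith
  exact div_le_div₀ (le_trans (by positivity) num_le) num_le (div_pos hS posS) den_le
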